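/- arXiv:2510.21016 — 8 statements merged into one kernel-verified Lean document; each statement's English description precedes it below -/
import Mathlib

section
/- Let n ≥ 1, let c < d be real numbers, and let B : [c,d] → ℂ^{2n×2n} be continuous with B(x) Hermitian for every x. Suppose X : [c,d] → ℂ^{2n×n} is continuously differentiable with J X'(x) = B(x) X(x) for all x ∈ [c,d]. If X(c)* J X(c) = 0, then X(x)* J X(x) = 0 for every x ∈ [c,d]; moreover, the rank of X(x) equals the rank of X(c) for every x ∈ [c,d]. In particular, if X(c) has rank n, then for every x the columns of X(x) span an n-dimensional subspace ℓ(x) of ℂ^{2n} on which u* J v = 0 for all u, v ∈ ℓ(x) (a Lagrangian subspace). -/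
open Matrix

/-- The standard `2n × 2n` complex symplectic matrix `J = [[0, -Iₙ],[Iₙ, 0]]`,
with `ℂ^{2n}` realized as functions on `Fin n ⊕ Fin n`. -/
noncomputable def symJ (n : ℕ) : Matrix (Fin n ⊕ Fin n) (Fin n ⊕ Fin n) ℂ :=
  Matrix.fromBlocks 0 (-1) 1 0

lemma lfp_zero_right {E : Type*} [NormedAddCommGroup E] [NormedSpace ℝ E] {a b K : ℝ}
    {y y' : ℝ → E} (hy : ∀ t ∈ Set.Icc a b, HasDerivWithinAt y (y' t) (Set.Icc a b) t)
    (hb : ∀ t ∈ Set.Icc a b, ‖y' t‖ ≤ K * ‖y t‖) (h0 : y a = 0) :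
    ∀ t ∈ Set.Icc a b, y t = 0 := by
  apply eq_zero_of_abs_deriv_le_mul_abs_self_of_eq_zero_right (f' := y') (K := K)
  · exact fun t ht => (hy t ht).continuousWithinAt
  · intro t ht
    exact (hy t ⟨ht.1, ht.2.le⟩).mono_of_mem_nhdsWithin
      (Icc_mem_nhdsGE_of_mem ht)
  · exact h0
  · exact fun t ht => hb t ⟨ht.1, ht.2.le⟩

lemma lfp_zero_left {E : Type*} [NormedAddCommGroup E] [NormedSpace ℝ E] {a b K : ℝ}
    {y y' : ℝ → E} (hy : ∀ t ∈ Set.Icc a b, HasDerivWithinAt y (y' t) (Set.Icc a b) t)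
    (hb : ∀ t ∈ Set.Icc a b, ‖y' t‖ ≤ K * ‖y t‖) (h0 : y b = 0) :
    ∀ t ∈ Set.Icc a b, y t = 0 := by
  have hm : ∀ t ∈ Set.Icc a b, a + b - t ∈ Set.Icc a b := by
    intro t ht
    exact ⟨by linarith [ht.2], by linarith [ht.1]⟩
  have key := lfp_zero_right (a := a) (b := b) (K := K) (y := fun t => y (a + b - t))
    (y' := fun t => -(y' (a + b - t))) ?_ ?_ ?_
  · intro t ht
    have := key _ (hm t ht)
    simpa using this
  · intro t ht
    have h1 : HasDerivWithinAt (fun t : ℝ => a + b - t) (-1) (Set.Icc a b) t := by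
      simpa using (hasDerivWithinAt_id t (Set.Icc a b)).const_sub (a + b)
    have := HasDerivWithinAt.scomp t (hy _ (hm t ht)) h1 hm
    simpa [Function.comp_def] using this
  · intro t ht
    simpa using hb _ (hm t ht)
  · simpa using h0

lemma lfp_J_sq (n : ℕ) : symJ n * symJ n = -1 := by
  simp [symJ, Matrix.fromBlocks_multiply, ← Matrix.fromBlocks_one, Matrix.fromBlocks_neg]

lemma lfp_J_star (n : ℕ) : (symJ n)ᴴ = -symJ n := by
  simp [symJ, Matrix.fromBlocks_conjTranspose, Matrix.fromBlocks_neg]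

/-- For a `2n × n` matrix solution of `J X' = B(x) X` with `X(c)* J X(c) = 0`, the relation
`X(x)* J X(x) = 0` and the rank of `X(x)` are preserved in `x`; in particular a frame for
a Lagrangian subspace evolves through frames for Lagrangian subspaces. -/
theorem lagrangian_frame_propagation
    (n : ℕ) (hn : 1 ≤ n) (c d : ℝ) (hcd : c < d)
    (B : ℝ → Matrix (Fin n ⊕ Fin n) (Fin n ⊕ Fin n) ℂ)
    (X X' : ℝ → Matrix (Fin n ⊕ Fin n) (Fin n) ℂ)
    (hBcont : ∀ i j, ContinuousOn (fun x => B x i j) (Set.Icc c d))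
    (hBherm : ∀ x ∈ Set.Icc c d, (B x).IsHermitian)
    (hX : ∀ x ∈ Set.Icc c d, ∀ i j,
      HasDerivWithinAt (fun t => X t i j) (X' x i j) (Set.Icc c d) x)
    (hX'cont : ∀ i j, ContinuousOn (fun x => X' x i j) (Set.Icc c d))
    (hode : ∀ x ∈ Set.Icc c d, symJ n * X' x = B x * X x)
    (hiso : (X c)ᴴ * symJ n * X c = 0) :
    (∀ x ∈ Set.Icc c d, (X x)ᴴ * symJ n * X x = 0)
    ∧ (∀ x ∈ Set.Icc c d, (X x).rank = (X c).rank)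
    ∧ ((X c).rank = n →
        ∀ x ∈ Set.Icc c d,
          Module.finrank ℂ (LinearMap.range (X x).mulVecLin) = n
          ∧ ∀ u ∈ LinearMap.range (X x).mulVecLin,
              ∀ v ∈ LinearMap.range (X x).mulVecLin,
                star u ⬝ᵥ (symJ n *ᵥ v) = 0) := by
  have hderiv : ∀ x ∈ Set.Icc c d, (X' x)ᴴ * symJ n * X x + (X x)ᴴ * symJ n * X' x = 0 := by
    intro x hx
    have h1 := congrArg Matrix.conjTranspose (hode x hx)
    rw [Matrix.conjTranspose_mul, Matrix.conjTranspose_mul, lfp_J_star, (hBherm x hx).eq,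
      Matrix.mul_neg] at h1
    rw [Matrix.mul_assoc (X x)ᴴ, hode x hx, ← Matrix.mul_assoc, ← h1]
    simp
  have P1 : ∀ x ∈ Set.Icc c d, (X x)ᴴ * symJ n * X x = 0 := by
    have hent : ∀ i j, ∀ x ∈ Set.Icc c d,
        HasDerivWithinAt (fun t => ((X t)ᴴ * symJ n * X t) i j) 0 (Set.Icc c d) x := by
      intro i j x hx
      have h2 := congrFun (congrFun (hderiv x hx) i) j
      have h3 : HasDerivWithinAt (fun t => ((X t)ᴴ * symJ n * X t) i j)
          (((X' x)ᴴ * symJ n * X x + (X x)ᴴ * symJ n * X' x) i j) (Set.Icc c d) x := by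
        simp only [Matrix.add_apply, Matrix.mul_apply, Matrix.conjTranspose_apply,
          ← Finset.sum_add_distrib]
        refine HasDerivWithinAt.fun_sum fun l _ => ?_
        refine HasDerivWithinAt.fun_mul ?_ (hX x hx l j)
        refine HasDerivWithinAt.fun_sum fun k _ => ?_
        exact (hX x hx k i).star.mul_const _
      rw [h2] at h3
      exact h3
    intro x hx
    ext i j
    have := constant_of_has_deriv_right_zero
      (f := fun t => ((X t)ᴴ * symJ n * X t) i j) (a := c) (b := d)
      (fun t ht => (hent i j t ht).continuousWithinAt)
      (fun t ht => (hent i j t ⟨ht.1, ht.2.le⟩).mono_of_mem_nhdsWithin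
        (Icc_mem_nhdsGE_of_mem ht)) x hx
    rw [this, hiso]
  have hX'eq : ∀ x ∈ Set.Icc c d, X' x = -(symJ n * B x) * X x := by
    intro x hx
    rw [Matrix.neg_mul, Matrix.mul_assoc, ← hode x hx, ← Matrix.mul_assoc, lfp_J_sq]
    simp
  obtain ⟨K, hK⟩ : ∃ K, ∀ x ∈ Set.Icc c d, ∑ i, ∑ j, ‖(-(symJ n * B x)) i j‖ ≤ K := by
    have hc : ContinuousOn (fun x => ∑ i, ∑ j, ‖(-(symJ n * B x)) i j‖) (Set.Icc c d) := by
      refine continuousOn_finsetSum _ fun i _ => continuousOn_finsetSum _ fun j _ => ?_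
      refine ContinuousOn.norm ?_
      simp only [Matrix.neg_apply, Matrix.mul_apply]
      refine ContinuousOn.neg ?_
      exact continuousOn_finsetSum _ fun k _ => continuousOn_const.mul (hBcont k j)
    obtain ⟨K, hK⟩ := isCompact_Icc.exists_bound_of_continuousOn hc
    exact ⟨K, fun x hx => (le_abs_self _).trans (hK x hx)⟩
  have hK0 : 0 ≤ K := le_trans (by positivity) (hK c ⟨le_rfl, hcd.le⟩)
  have hyd : ∀ v : Fin n → ℂ, ∀ x ∈ Set.Icc c d,
      HasDerivWithinAt (fun t => X t *ᵥ v) (X' x *ᵥ v) (Set.Icc c d) x := by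
    intro v x hx
    rw [hasDerivWithinAt_pi]
    intro i
    simp only [Matrix.mulVec, dotProduct]
    exact HasDerivWithinAt.fun_sum fun j _ => (hX x hx i j).mul_const _
  have hyb : ∀ v : Fin n → ℂ, ∀ x ∈ Set.Icc c d, ‖X' x *ᵥ v‖ ≤ K * ‖X x *ᵥ v‖ := by
    intro v x hx
    rw [hX'eq x hx, ← Matrix.mulVec_mulVec]
    generalize X x *ᵥ v = w
    rw [pi_norm_le_iff_of_nonneg (by positivity)]
    intro i
    calc ‖(-(symJ n * B x) *ᵥ w) i‖ ≤ ∑ j, ‖(-(symJ n * B x)) i j * w j‖ := by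
              simp only [Matrix.mulVec, dotProduct]
              exact norm_sum_le _ _
      _ ≤ ∑ j, ‖(-(symJ n * B x)) i j‖ * ‖w‖ := by
        gcongr with j
        rw [norm_mul]
        gcongr
        exact norm_le_pi_norm w j
      _ = (∑ j, ‖(-(symJ n * B x)) i j‖) * ‖w‖ := by rw [Finset.sum_mul]
      _ ≤ K * ‖w‖ := by
        gcongr
        refine le_trans ?_ (hK x hx)
        exact Finset.single_le_sum (f := fun i => ∑ j, ‖(-(symJ n * B x)) i j‖)
          (fun i _ => by positivity) (Finset.mem_univ i)
  have hker : ∀ x ∈ Set.Icc c d,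
      LinearMap.ker (X x).mulVecLin = LinearMap.ker (X c).mulVecLin := by
    intro x hx
    ext v
    simp only [LinearMap.mem_ker, Matrix.mulVecLin_apply]
    constructor
    · intro h
      have hsub : Set.Icc c x ⊆ Set.Icc c d := Set.Icc_subset_Icc_right hx.2
      exact lfp_zero_left (y := fun t => X t *ᵥ v) (y' := fun t => X' t *ᵥ v)
        (fun t ht => (hyd v t (hsub ht)).mono hsub)
        (fun t ht => hyb v t (hsub ht)) h c ⟨le_rfl, hx.1⟩
    · intro h
      exact lfp_zero_right (y := fun t => X t *ᵥ v) (y' := fun t => X' t *ᵥ v)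
        (hyd v) (hyb v) h x hx
  have P2 : ∀ x ∈ Set.Icc c d, (X x).rank = (X c).rank := by
    intro x hx
    have h1 := LinearMap.finrank_range_add_finrank_ker (X x).mulVecLin
    have h2 := LinearMap.finrank_range_add_finrank_ker (X c).mulVecLin
    rw [hker x hx] at h1
    simp only [Matrix.rank]
    omega
  refine ⟨P1, P2, ?_⟩
  intro hr x hx
  refine ⟨(P2 x hx).trans hr, ?_⟩
  rintro _ ⟨u, rfl⟩ _ ⟨v, rfl⟩
  simp only [Matrix.mulVecLin_apply]
  rw [Matrix.star_mulVec, ← Matrix.dotProduct_mulVec, Matrix.mulVec_mulVec, Matrix.mulVec_mulVec,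
    P1 x hx]
  simp
end

section
/- Let n, m ≥ 1, let a < d be real numbers, and let B, B₁ : [a,d] → ℂ^{2n×2n} be continuous with B(x) and B₁(x) Hermitian for every x. Suppose X, Y : [a,d] → ℂ^{2n×m} are continuously differentiable and satisfy J X'(x) = B(x) X(x) and J Y'(x) = B₁(x) X(x) + B(x) Y(x) for all x ∈ [a,d] (the second equation is the formal λ-derivative of the first, with Y playing the role of ∂_λ X and B₁ the role of ∂_λ B). Then for every x ∈ [a,d], X(x)* J Y(x) = X(a)* J Y(a) + ∫_a^x X(ξ)* B₁(ξ) X(ξ) dξ; in particular, the derivative of x ↦ X(x)* J Y(x) equals X(x)* B₁(x) X(x), and if X(a)* J Y(a) is Hermitian then X(x)* J Y(x) is Hermitian for all x, and if additionally B₁(ξ) is positive semidefinite for all ξ then X(x)* J Y(x) − X(a)* J Y(a) is positive semidefinite for all x. -/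
open Matrix MeasureTheory
open scoped ComplexOrder

/-- Entrywise product rule for matrix-valued functions. -/
lemma hasDeriv_matrix_mul {p q r : Type*} [Fintype q]
    (F F' : ℝ → Matrix p q ℂ) (G G' : ℝ → Matrix q r ℂ) (s : Set ℝ) (x : ℝ)
    (hF : ∀ i j, HasDerivWithinAt (fun t => F t i j) (F' x i j) s x)
    (hG : ∀ i j, HasDerivWithinAt (fun t => G t i j) (G' x i j) s x) (i : p) (j : r) :
    HasDerivWithinAt (fun t => (F t * G t) i j) ((F' x * G x + F x * G' x) i j) s x := by
  simp only [Matrix.mul_apply, Matrix.add_apply, ← Finset.sum_add_distrib]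
  exact HasDerivWithinAt.fun_sum fun k _ => (hF i k).mul (hG k j)

lemma continuousOn_matrix_mul {p q r : Type*} [Fintype q]
    (F : ℝ → Matrix p q ℂ) (G : ℝ → Matrix q r ℂ) (s : Set ℝ)
    (hF : ∀ i j, ContinuousOn (fun t => F t i j) s)
    (hG : ∀ i j, ContinuousOn (fun t => G t i j) s) (i : p) (j : r) :
    ContinuousOn (fun t => (F t * G t) i j) s := by
  simp only [Matrix.mul_apply]
  exact continuousOn_finsetSum _ fun k _ => (hF i k).mul (hG k j)

lemma symJ_conjTranspose (n : ℕ) : (symJ n)ᴴ = - symJ n := by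
  simp [symJ, Matrix.fromBlocks_conjTranspose, Matrix.fromBlocks_neg]

lemma intervalIntegral_complex_nonneg (f : ℝ → ℂ) (a b : ℝ) (hab : a ≤ b)
    (hf : ∀ x ∈ Set.Icc a b, 0 ≤ f x) : 0 ≤ ∫ x in a..b, f x := by
  have h : ∫ x in a..b, f x = ∫ x in a..b, (((f x).re : ℝ) : ℂ) := by
    apply intervalIntegral.integral_congr
    intro x hx
    rw [Set.uIcc_of_le hab] at hx
    have := hf x hx
    rw [Complex.le_def] at this
    apply Complex.ext
    · simp
    · simpa using this.2.symm
  rw [h, intervalIntegral.integral_ofReal]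
  have : 0 ≤ ∫ x in a..b, (f x).re := by
    apply intervalIntegral.integral_nonneg hab
    intro x hx
    exact (Complex.le_def.1 (hf x hx)).1
  exact_mod_cast this

/-- If `J X' = B X` and `J Y' = B₁ X + B Y` on `[a,d]` (so `Y` plays the role of `∂_λ X`
and `B₁` of `∂_λ B`), then `X* J Y` evolves by `X(x)* J Y(x) = X(a)* J Y(a) + ∫_a^x X* B₁ X`;
in particular its derivative is `X* B₁ X`, Hermiticity at `a` propagates, and if `B₁` is
positive semidefinite then `X(x)* J Y(x) − X(a)* J Y(a)` is positive semidefinite. -/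
theorem monotonicity_identity
    (n m : ℕ) (hn : 1 ≤ n) (hm : 1 ≤ m) (a d : ℝ) (had : a < d)
    (B B₁ : ℝ → Matrix (Fin n ⊕ Fin n) (Fin n ⊕ Fin n) ℂ)
    (X Y X' Y' : ℝ → Matrix (Fin n ⊕ Fin n) (Fin m) ℂ)
    (hBcont : ∀ i j, ContinuousOn (fun x => B x i j) (Set.Icc a d))
    (hB₁cont : ∀ i j, ContinuousOn (fun x => B₁ x i j) (Set.Icc a d))
    (hBherm : ∀ x ∈ Set.Icc a d, (B x).IsHermitian)
    (hB₁herm : ∀ x ∈ Set.Icc a d, (B₁ x).IsHermitian)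
    (hX : ∀ x ∈ Set.Icc a d, ∀ i j,
      HasDerivWithinAt (fun t => X t i j) (X' x i j) (Set.Icc a d) x)
    (hX'cont : ∀ i j, ContinuousOn (fun x => X' x i j) (Set.Icc a d))
    (hY : ∀ x ∈ Set.Icc a d, ∀ i j,
      HasDerivWithinAt (fun t => Y t i j) (Y' x i j) (Set.Icc a d) x)
    (hY'cont : ∀ i j, ContinuousOn (fun x => Y' x i j) (Set.Icc a d))
    (hodeX : ∀ x ∈ Set.Icc a d, symJ n * X' x = B x * X x)
    (hodeY : ∀ x ∈ Set.Icc a d, symJ n * Y' x = B₁ x * X x + B x * Y x) :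
    (∀ x ∈ Set.Icc a d, ∀ i j,
        ((X x)ᴴ * symJ n * Y x) i j
          = ((X a)ᴴ * symJ n * Y a) i j + ∫ ξ in a..x, ((X ξ)ᴴ * B₁ ξ * X ξ) i j)
    ∧ (∀ x ∈ Set.Icc a d, ∀ i j,
        HasDerivWithinAt (fun t => ((X t)ᴴ * symJ n * Y t) i j)
          (((X x)ᴴ * B₁ x * X x) i j) (Set.Icc a d) x)
    ∧ (((X a)ᴴ * symJ n * Y a).IsHermitian →
        ∀ x ∈ Set.Icc a d, ((X x)ᴴ * symJ n * Y x).IsHermitian)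
    ∧ (((X a)ᴴ * symJ n * Y a).IsHermitian → (∀ x ∈ Set.Icc a d, (B₁ x).PosSemidef) →
        ∀ x ∈ Set.Icc a d,
          ((X x)ᴴ * symJ n * Y x - (X a)ᴴ * symJ n * Y a).PosSemidef) := by
  have hXc : ∀ i j, ContinuousOn (fun x => X x i j) (Set.Icc a d) :=
    fun i j x hx => (hX x hx i j).continuousWithinAt
  have hXHc : ∀ i j, ContinuousOn (fun x => (X x)ᴴ i j) (Set.Icc a d) := by
    intro i j
    simp only [Matrix.conjTranspose_apply]
    exact (hXc j i).star
  have hMc : ∀ i j, ContinuousOn (fun x => ((X x)ᴴ * B₁ x * X x) i j) (Set.Icc a d) :=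
    continuousOn_matrix_mul _ _ _ (continuousOn_matrix_mul _ _ _ hXHc hB₁cont) hXc
  have hder : ∀ x ∈ Set.Icc a d, ∀ i j,
        HasDerivWithinAt (fun t => ((X t)ᴴ * symJ n * Y t) i j)
          (((X x)ᴴ * B₁ x * X x) i j) (Set.Icc a d) x := by
    intro x hx i j
    have h1 : ∀ i j, HasDerivWithinAt (fun t => (X t)ᴴ i j) ((X' x)ᴴ i j) (Set.Icc a d) x := by
      intro i j
      simp only [Matrix.conjTranspose_apply]
      exact (hX x hx j i).star
    have h2 := hasDeriv_matrix_mul (fun t => (X t)ᴴ) (fun t => (X' t)ᴴ) (fun _ => symJ n)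
      (fun _ => 0) (Set.Icc a d) x h1 (fun i j => hasDerivWithinAt_const _ _ _)
    have h3 := hasDeriv_matrix_mul (fun t => (X t)ᴴ * symJ n)
      (fun t => (X' t)ᴴ * symJ n + (X t)ᴴ * (0 : Matrix (Fin n ⊕ Fin n) (Fin n ⊕ Fin n) ℂ)) Y Y' (Set.Icc a d) x h2 (hY x hx) i j
    have e1 : (X' x)ᴴ * symJ n = -((X x)ᴴ * B x) := by
      have := congrArg Matrix.conjTranspose (hodeX x hx)
      rw [Matrix.conjTranspose_mul, Matrix.conjTranspose_mul, symJ_conjTranspose,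
        (hBherm x hx).eq, Matrix.mul_neg] at this
      rw [← this, neg_neg]
    have e2 : ((X' x)ᴴ * symJ n + (X x)ᴴ * (0 : Matrix (Fin n ⊕ Fin n) (Fin n ⊕ Fin n) ℂ)) * Y x + (X x)ᴴ * symJ n * Y' x
        = (X x)ᴴ * B₁ x * X x := by
      rw [Matrix.mul_zero, add_zero, e1, Matrix.mul_assoc _ (symJ n), hodeY x hx,
        Matrix.mul_add, Matrix.neg_mul, Matrix.mul_assoc, Matrix.mul_assoc]
      abel
    rw [← e2]
    exact h3
  have hsub : ∀ x ∈ Set.Icc a d, Set.Icc a x ⊆ Set.Icc a d :=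
    fun x hx => Set.Icc_subset_Icc_right hx.2
  have hii : ∀ x ∈ Set.Icc a d, ∀ i j, IntervalIntegrable
      (fun ξ => ((X ξ)ᴴ * B₁ ξ * X ξ) i j) volume a x := fun x hx i j =>
    ContinuousOn.intervalIntegrable_of_Icc hx.1 ((hMc i j).mono (hsub x hx))
  have hint : ∀ x ∈ Set.Icc a d, ∀ i j,
        ((X x)ᴴ * symJ n * Y x) i j
          = ((X a)ᴴ * symJ n * Y a) i j + ∫ ξ in a..x, ((X ξ)ᴴ * B₁ ξ * X ξ) i j := by
    intro x hx i j
    have := intervalIntegral.integral_eq_sub_of_hasDerivAt_of_le hx.1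
      (f := fun t => ((X t)ᴴ * symJ n * Y t) i j)
      (fun t ht => ((hder t (hsub x hx ht) i j).continuousWithinAt).mono (hsub x hx))
      (fun t ht => (hder t (hsub x hx (Set.Ioo_subset_Icc_self ht)) i j).hasDerivAt
        (Icc_mem_nhds ht.1 (ht.2.trans_le hx.2)))
      (hii x hx i j)
    rw [this]
    ring
  have hherm : ((X a)ᴴ * symJ n * Y a).IsHermitian →
        ∀ x ∈ Set.Icc a d, ((X x)ᴴ * symJ n * Y x).IsHermitian := by
    intro ha x hx
    refine Matrix.IsHermitian.ext fun i j => ?_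
    rw [hint x hx i j, hint x hx j i, star_add, ha.apply]
    congr 1
    change (starRingEnd ℂ) _ = _
    rw [← intervalIntegral.intervalIntegral_conj]
    apply intervalIntegral.integral_congr
    intro ξ hξ
    rw [Set.uIcc_of_le hx.1] at hξ
    exact (Matrix.isHermitian_conjTranspose_mul_mul (X ξ) (hB₁herm ξ (hsub x hx hξ))).apply i j
  refine ⟨hint, hder, hherm, ?_⟩
  intro ha hpos x hx
  refine Matrix.PosSemidef.of_dotProduct_mulVec_nonneg ((hherm ha x hx).sub ha) fun v => ?_
  have key : star v ⬝ᵥ (((X x)ᴴ * symJ n * Y x - (X a)ᴴ * symJ n * Y a) *ᵥ v)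
      = ∫ ξ in a..x, star v ⬝ᵥ (((X ξ)ᴴ * B₁ ξ * X ξ) *ᵥ v) := by
    have hE : ∀ i j, ((X x)ᴴ * symJ n * Y x - (X a)ᴴ * symJ n * Y a) i j
        = ∫ ξ in a..x, ((X ξ)ᴴ * B₁ ξ * X ξ) i j := by
      intro i j
      rw [Matrix.sub_apply, hint x hx i j, add_sub_cancel_left]
    simp only [dotProduct, Matrix.mulVec, hE]
    have hI : ∀ i j, IntervalIntegrable
        (fun ξ => ((X ξ)ᴴ * B₁ ξ * X ξ) i j * v j) volume a x :=
      fun i j => (hii x hx i j).mul_const _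
    have hS : ∀ i, IntervalIntegrable
        (fun ξ => ∑ j, ((X ξ)ᴴ * B₁ ξ * X ξ) i j * v j) volume a x := by
      intro i
      exact ContinuousOn.intervalIntegrable_of_Icc hx.1 (continuousOn_finsetSum _ fun j _ =>
        ((hMc i j).mono (hsub x hx)).mul continuousOn_const)
    rw [intervalIntegral.integral_finsetSum (fun i _ => (hS i).const_mul _)]
    refine Finset.sum_congr rfl fun i _ => ?_
    rw [intervalIntegral.integral_const_mul,
      intervalIntegral.integral_finsetSum (fun j _ => hI i j)]
    congr 1
    refine Finset.sum_congr rfl fun j _ => ?_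
    rw [intervalIntegral.integral_mul_const]
  rw [key]
  refine intervalIntegral_complex_nonneg _ a x hx.1 fun ξ hξ => ?_
  exact ((hpos ξ (hsub x hx hξ)).conjTranspose_mul_mul_same (X ξ)).dotProduct_mulVec_nonneg v
end

section
/- Let n ≥ 1, let c < d be real numbers, let B, B₁ : [c,d] → ℂ^{2n×2n} be continuous with B(x) and B₁(x) Hermitian for every x, and let μ ∈ ℂ with τ := Im μ ≠ 0. Suppose Φ : [c,d] → ℂ^{2n×2n} is continuously differentiable with J Φ'(x) = (B(x) + μ B₁(x)) Φ(x) on [c,d]. Define 𝒜(x) := (1/(2τ)) Φ(x)* (J/i) Φ(x). Then 𝒜(x) is Hermitian for every x ∈ [c,d], and 𝒜'(x) = Φ(x)* B₁(x) Φ(x) for every x; in particular, if B₁(x) is positive semidefinite for every x, then 𝒜(x₂) − 𝒜(x₁) is positive semidefinite whenever c ≤ x₁ ≤ x₂ ≤ d. -/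
open Matrix
open scoped ComplexOrder

/-- Niessen's matrix `𝒜(x) = (1/(2 Im μ)) Φ(x)* (J/i) Φ(x)`, built from a fundamental
matrix of `J y' = (B(x) + μ B₁(x)) y`, is Hermitian, its derivative is `Φ* B₁ Φ`, and it
is monotone nondecreasing (in the semidefinite order) when `B₁` is positive semidefinite. -/
theorem niessen_matrix_monotone
    (n : ℕ) (hn : 1 ≤ n) (c d : ℝ) (hcd : c < d)
    (B B₁ : ℝ → Matrix (Fin n ⊕ Fin n) (Fin n ⊕ Fin n) ℂ)
    (μ : ℂ) (hτ : μ.im ≠ 0)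
    (Φ Φ' : ℝ → Matrix (Fin n ⊕ Fin n) (Fin n ⊕ Fin n) ℂ)
    (hBcont : ∀ i j, ContinuousOn (fun x => B x i j) (Set.Icc c d))
    (hB₁cont : ∀ i j, ContinuousOn (fun x => B₁ x i j) (Set.Icc c d))
    (hBherm : ∀ x ∈ Set.Icc c d, (B x).IsHermitian)
    (hB₁herm : ∀ x ∈ Set.Icc c d, (B₁ x).IsHermitian)
    (hΦ : ∀ x ∈ Set.Icc c d, ∀ i j,
      HasDerivWithinAt (fun t => Φ t i j) (Φ' x i j) (Set.Icc c d) x)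
    (hΦ'cont : ∀ i j, ContinuousOn (fun x => Φ' x i j) (Set.Icc c d))
    (hode : ∀ x ∈ Set.Icc c d, symJ n * Φ' x = (B x + μ • B₁ x) * Φ x)
    (A : ℝ → Matrix (Fin n ⊕ Fin n) (Fin n ⊕ Fin n) ℂ)
    (hA : ∀ x, A x = (1 / (2 * (μ.im : ℂ))) • ((Φ x)ᴴ * (Complex.I⁻¹ • symJ n) * Φ x)) :
    (∀ x ∈ Set.Icc c d, (A x).IsHermitian)
    ∧ (∀ x ∈ Set.Icc c d, ∀ i j,
        HasDerivWithinAt (fun t => A t i j) (((Φ x)ᴴ * B₁ x * Φ x) i j) (Set.Icc c d) x)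
    ∧ ((∀ x ∈ Set.Icc c d, (B₁ x).PosSemidef) →
        ∀ x₁ ∈ Set.Icc c d, ∀ x₂ ∈ Set.Icc c d, x₁ ≤ x₂ → (A x₂ - A x₁).PosSemidef) := by
  have hJ : (symJ n)ᴴ = -symJ n := by
    simp [symJ, Matrix.fromBlocks_conjTranspose, Matrix.fromBlocks_neg]
  have hτ2 : (μ.im : ℂ) ≠ 0 := by exact_mod_cast hτ
  have hherm : ∀ x, (A x).IsHermitian := by
    intro x
    unfold Matrix.IsHermitian
    rw [hA]
    simp [Matrix.conjTranspose_smul, Matrix.conjTranspose_mul, hJ, Matrix.mul_assoc]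
  have hder : ∀ x ∈ Set.Icc c d, ∀ i j,
      HasDerivWithinAt (fun t => A t i j) (((Φ x)ᴴ * B₁ x * Φ x) i j) (Set.Icc c d) x := by
    intro x hx i j
    have hode' : (Φ' x)ᴴ * symJ n = -((Φ x)ᴴ * (B x + (starRingEnd ℂ μ) • B₁ x)) := by
      have h := congrArg Matrix.conjTranspose (hode x hx)
      rw [Matrix.conjTranspose_mul, Matrix.conjTranspose_mul, hJ, Matrix.conjTranspose_add,
        Matrix.conjTranspose_smul, (hBherm x hx).eq, (hB₁herm x hx).eq, Matrix.mul_neg] at h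
      rw [← neg_neg ((Φ' x)ᴴ * symJ n), h]
      rfl
    have hμ : μ - starRingEnd ℂ μ = 2 * μ.im * Complex.I := by
      rw [Complex.sub_conj]; push_cast; ring
    have key : (Φ x)ᴴ * B₁ x * Φ x = (1 / (2 * (μ.im : ℂ))) •
        ((Φ' x)ᴴ * (Complex.I⁻¹ • symJ n) * Φ x + (Φ x)ᴴ * (Complex.I⁻¹ • symJ n) * Φ' x) := by
      have e : (Φ' x)ᴴ * (Complex.I⁻¹ • symJ n) * Φ x + (Φ x)ᴴ * (Complex.I⁻¹ • symJ n) * Φ' x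
          = (Complex.I⁻¹ * (μ - starRingEnd ℂ μ)) • ((Φ x)ᴴ * B₁ x * Φ x) := by
        rw [Matrix.mul_smul, Matrix.smul_mul, hode', Matrix.mul_smul, Matrix.smul_mul,
          Matrix.mul_assoc (Φ x)ᴴ (symJ n), hode x hx, ← smul_add, mul_smul]
        congr 1
        simp only [Matrix.neg_mul, Matrix.mul_add, Matrix.add_mul, Matrix.mul_smul,
          Matrix.smul_mul, ← Matrix.mul_assoc, sub_smul]
        abel
      rw [e, hμ, smul_smul]
      have : (1 / (2 * (μ.im : ℂ))) * (Complex.I⁻¹ * (2 * μ.im * Complex.I)) = 1 := by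
        field_simp
      rw [this, one_smul]
    rw [key]
    simp only [hA]
    generalize (Complex.I⁻¹ • symJ n) = K
    simp only [Matrix.smul_apply, smul_eq_mul, Matrix.add_apply]
    refine HasDerivWithinAt.const_mul _ ?_
    simp only [Matrix.mul_apply, Matrix.conjTranspose_apply, ← Finset.sum_add_distrib]
    refine HasDerivWithinAt.fun_sum fun k _ => ?_
    refine HasDerivWithinAt.fun_mul ?_ (hΦ x hx k j)
    refine HasDerivWithinAt.fun_sum fun l _ => ?_
    exact ((hΦ x hx l i).star).mul_const _
  refine ⟨fun x _ => hherm x, hder, ?_⟩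
  intro hpos x₁ h₁ x₂ h₂ h12
  refine Matrix.PosSemidef.of_dotProduct_mulVec_nonneg ((hherm x₂).sub (hherm x₁)) fun v => ?_
  have hq : ∀ x ∈ Set.Icc c d, HasDerivWithinAt (fun t => star v ⬝ᵥ (A t *ᵥ v))
      (star v ⬝ᵥ (((Φ x)ᴴ * B₁ x * Φ x) *ᵥ v)) (Set.Icc c d) x := by
    intro x hx
    simp only [dotProduct, Matrix.mulVec]
    refine HasDerivWithinAt.fun_sum fun i _ => ?_
    refine HasDerivWithinAt.const_mul _ ?_
    refine HasDerivWithinAt.fun_sum fun j _ => ?_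
    exact (hder x hx i j).mul_const _
  have hre : ∀ x ∈ Set.Icc c d, HasDerivWithinAt (fun t => (star v ⬝ᵥ (A t *ᵥ v)).re)
      (star v ⬝ᵥ (((Φ x)ᴴ * B₁ x * Φ x) *ᵥ v)).re (Set.Icc c d) x := by
    intro x hx
    exact (Complex.reCLM.hasFDerivAt.comp_hasDerivWithinAt x (hq x hx))
  have hmono : MonotoneOn (fun t => (star v ⬝ᵥ (A t *ᵥ v)).re) (Set.Icc c d) := by
    refine monotoneOn_of_hasDerivWithinAt_nonneg (convex_Icc c d)
      (fun x hx => (hre x hx).continuousWithinAt)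
      (fun x hx => (hre x (interior_subset hx)).mono interior_subset) ?_
    intro x hx
    have h := ((hpos x (interior_subset hx)).conjTranspose_mul_mul_same
      (Φ x)).dotProduct_mulVec_nonneg v
    exact (Complex.le_def.1 h).1
  have hm := hmono h₁ h₂ h12
  have him := ((hherm x₂).sub (hherm x₁)).im_star_dotProduct_mulVec_self v
  rw [Complex.le_def]
  refine ⟨?_, by simpa using him.symm⟩
  rw [Matrix.sub_mulVec, dotProduct_sub, Complex.sub_re]
  simpa using hm
end

section
/- Let F and ν be real numbers with F > 0, ν > 1, and 2F²ν² > 1 + 2F + √(1 + 4F). Then F ν² > ν + 1; equivalently, F ν² / (ν + 1) > 1. -/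
/-- For Froude number `F > 0` and `ν > 1` with `2F²ν² > 1 + 2F + √(1 + 4F)`, one has
`Fν² > ν + 1`, equivalently `Fν²/(ν+1) > 1`. -/
theorem froude_inequality
    (F ν : ℝ) (hF : 0 < F) (hν : 1 < ν)
    (h : 1 + 2 * F + Real.sqrt (1 + 4 * F) < 2 * F ^ 2 * ν ^ 2) :
    ν + 1 < F * ν ^ 2 ∧ 1 < F * ν ^ 2 / (ν + 1) := by
  have hs : Real.sqrt (1 + 4 * F) ^ 2 = 1 + 4 * F := Real.sq_sqrt (by linarith)
  have hs0 : 0 ≤ Real.sqrt (1 + 4 * F) := Real.sqrt_nonneg _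
  have hFν : 0 < F * ν := mul_pos hF (by linarith)
  have h1 : 1 + Real.sqrt (1 + 4 * F) < 2 * (F * ν) := by
    apply lt_of_pow_lt_pow_left₀ 2 (by linarith)
    nlinarith
  have h2 : Real.sqrt (1 + 4 * F) ^ 2 < (2 * (F * ν) - 1) ^ 2 :=
    pow_lt_pow_left₀ (by linarith) hs0 (by norm_num)
  have h3 : ν + 1 < F * ν ^ 2 := by
    apply lt_of_mul_lt_mul_left _ hF.le
    nlinarith
  exact ⟨h3, by rw [lt_div_iff₀ (by linarith)]; linarith⟩
end

section
/- Let F, ν, H_R be real numbers with 0 < F < 2, ν > 1, H_R > 0, and 2F²ν² > 1 + 2F + √(1 + 4F). Define H_L := ν² H_R, H_s := (F ν² / (ν + 1))^{2/3} H_R, and H_* := ((−ν − 1 + √(8 F² ν⁴ + ν² + 2ν + 1)) / (2(ν + 1))) H_R. Then H_R < H_s < H_* < H_L. -/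
/-- Ordering of the characteristic heights `H_R < H_s < H_* < H_L` for a discontinuous
hydraulic shock profile of the inviscid Saint-Venant equations, where `H_L = ν²H_R`,
`H_s = (Fν²/(ν+1))^{2/3} H_R` is the sonic height and `H_*` is the left limit of the
profile at its discontinuity. -/
theorem hydraulic_heights_ordering
    (F ν H_R : ℝ) (hF0 : 0 < F) (hF2 : F < 2) (hν : 1 < ν) (hHR : 0 < H_R)
    (h : 1 + 2 * F + Real.sqrt (1 + 4 * F) < 2 * F ^ 2 * ν ^ 2)
    (H_L H_s H_star : ℝ)
    (hHL : H_L = ν ^ 2 * H_R)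
    (hHs : H_s = (F * ν ^ 2 / (ν + 1)) ^ ((2 : ℝ) / 3) * H_R)
    (hHstar : H_star
      = ((-ν - 1 + Real.sqrt (8 * F ^ 2 * ν ^ 4 + ν ^ 2 + 2 * ν + 1)) / (2 * (ν + 1))) * H_R) :
    H_R < H_s ∧ H_s < H_star ∧ H_star < H_L := by
  have hn : 0 < ν + 1 := by linarith
  have hs0 := Real.sqrt_nonneg (1 + 4 * F)
  have hs2 := Real.sq_sqrt (show 0 ≤ 1 + 4 * F by linarith)
  set s := Real.sqrt (1 + 4 * F)
  have hFν : 0 < F * ν := by positivity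
  have h1 : 1 + s < 2 * (F * ν) := by
    apply lt_of_pow_lt_pow_left₀ 2 (by positivity)
    nlinarith
  have h2 : s ^ 2 < (2 * (F * ν) - 1) ^ 2 :=
    pow_lt_pow_left₀ (by linarith) hs0 (by norm_num)
  have h3 : ν + 1 < F * ν ^ 2 := by
    have : F * (ν + 1) < F * (F * ν ^ 2) := by nlinarith
    exact lt_of_mul_lt_mul_left this hF0.le
  obtain ⟨a, ha⟩ : ∃ a, a = F * ν ^ 2 / (ν + 1) := ⟨_, rfl⟩
  have ha1 : 1 < a := by rw [ha, lt_div_iff₀ hn]; linarith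
  have han : a * (ν + 1) = F * ν ^ 2 := by rw [ha]; field_simp
  rw [← ha] at hHs
  have ht1 : 1 < a ^ ((2 : ℝ) / 3) := Real.one_lt_rpow ha1 (by norm_num)
  have ht3 : (a ^ ((2 : ℝ) / 3)) ^ 3 = a ^ 2 := by
    rw [← Real.rpow_natCast, ← Real.rpow_mul (by linarith), ← Real.rpow_natCast]
    norm_num
  set t := a ^ ((2 : ℝ) / 3)
  have hr0 := Real.sqrt_nonneg (8 * F ^ 2 * ν ^ 4 + ν ^ 2 + 2 * ν + 1)
  have hr2 := Real.sq_sqrt (show 0 ≤ 8 * F ^ 2 * ν ^ 4 + ν ^ 2 + 2 * ν + 1 by positivity)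
  set r := Real.sqrt (8 * F ^ 2 * ν ^ 4 + ν ^ 2 + 2 * ν + 1)
  have hr : r ^ 2 = (8 * a ^ 2 + 1) * (ν + 1) ^ 2 := by
    rw [hr2]; linear_combination (-8 * (a * (ν + 1) + F * ν ^ 2)) * han
  subst hHL hHs hHstar
  refine ⟨by nlinarith, ?_, ?_⟩
  · apply mul_lt_mul_of_pos_right _ hHR
    rw [lt_div_iff₀ (by positivity)]
    have : (2 * t + 1) * (ν + 1) < r := by
      apply lt_of_pow_lt_pow_left₀ 2 hr0
      rw [hr, mul_pow]
      apply mul_lt_mul_of_pos_right _ (by positivity)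
      rw [← ht3]
      have : 0 < t * ((t - 1) * (2 * t + 1)) := by
        have : 0 < t - 1 := by linarith
        positivity
      nlinarith
    linarith
  · apply mul_lt_mul_of_pos_right _ hHR
    rw [div_lt_iff₀ (by positivity)]
    have : r < (2 * ν ^ 2 + 1) * (ν + 1) := by
      apply lt_of_pow_lt_pow_left₀ 2 (by positivity)
      rw [hr2]
      have hF4 : F ^ 2 < 4 := by nlinarith
      have e1 : F ^ 2 * ν ^ 4 < 4 * ν ^ 4 := mul_lt_mul_of_pos_right hF4 (by positivity)
      have e2 : (4 * ν) * (2 * ν) ≤ (ν + 1) ^ 2 * (ν ^ 2 + 1) := by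
        apply mul_le_mul _ _ (by positivity) (by positivity) <;> nlinarith [sq_nonneg (ν - 1)]
      have e3 := mul_le_mul_of_nonneg_left e2 (sq_nonneg ν)
      nlinarith
    linarith
end

section
/- Let F, H_R, H_S, H_* be real numbers with F > 0, H_R > 0, H_S ≥ 0, H_* ≠ H_R, and suppose that H_S³ = F² H_R² / (1 + √H_R)² and that H_*² (√H_R + 1)² + H_* H_R (√H_R + 1)² − 2 F² H_R = 0. Define q₀ := H_S^{3/2}/F, c := √H_R + H_S^{3/2}/(F H_R), and Q_* := c H_* − q₀. Then (H_*³ − Q_*²)/(H_R − H_*) = ( (H_R + √H_R + 1)² H_* − (1 + 2F²) H_R ) / ( (√H_R + 1)² ). -/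
/-- Simplification of the ratio `(H_*³ − Q_*²)/(H_R − H_*)` in the hydraulic shock
analysis (normalized so `H_L = 1`), using the sonic relation
`H_S³ = F²H_R²/(1+√H_R)²` and the quadratic relation satisfied by `H_*`. -/
theorem hydraulic_ratio_identity
    (F H_R H_S H_star : ℝ) (hF : 0 < F) (hHR : 0 < H_R) (hHS : 0 ≤ H_S)
    (hne : H_star ≠ H_R)
    (hHS3 : H_S ^ 3 = F ^ 2 * H_R ^ 2 / (1 + Real.sqrt H_R) ^ 2)
    (hquad : H_star ^ 2 * (Real.sqrt H_R + 1) ^ 2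
        + H_star * H_R * (Real.sqrt H_R + 1) ^ 2 - 2 * F ^ 2 * H_R = 0)
    (q₀ c Q_star : ℝ)
    (hq₀ : q₀ = H_S ^ ((3 : ℝ) / 2) / F)
    (hc : c = Real.sqrt H_R + H_S ^ ((3 : ℝ) / 2) / (F * H_R))
    (hQ : Q_star = c * H_star - q₀) :
    (H_star ^ 3 - Q_star ^ 2) / (H_R - H_star)
      = ((H_R + Real.sqrt H_R + 1) ^ 2 * H_star - (1 + 2 * F ^ 2) * H_R)
          / (Real.sqrt H_R + 1) ^ 2 := by
  obtain ⟨s, hs, rfl⟩ : ∃ s : ℝ, 0 < s ∧ H_R = s ^ 2 :=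
    ⟨Real.sqrt H_R, Real.sqrt_pos.mpr hHR, (Real.sq_sqrt hHR.le).symm⟩
  rw [Real.sqrt_sq hs.le] at *
  have h1 : H_S ^ ((3 : ℝ) / 2) = F * s ^ 2 / (1 + s) := by
    have h2 : (H_S ^ ((3 : ℝ) / 2)) ^ 2 = (F * s ^ 2 / (1 + s)) ^ 2 := by
      rw [← Real.rpow_natCast, ← Real.rpow_mul hHS]
      have : (3 : ℝ) / 2 * ((2 : ℕ) : ℝ) = ((3 : ℕ) : ℝ) := by norm_num
      rw [this, Real.rpow_natCast, hHS3, div_pow, mul_pow]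
    exact (pow_left_inj₀ (Real.rpow_nonneg hHS _) (by positivity) two_ne_zero).mp h2
  rw [h1] at hq₀ hc
  have hs1 : s + 1 ≠ 0 := by positivity
  have hQ' : Q_star = ((s ^ 2 + s + 1) * H_star - s ^ 2) / (s + 1) := by
    rw [hQ, hc, hq₀, add_comm 1 s]
    field_simp
  have hd : s ^ 2 - H_star ≠ 0 := sub_ne_zero.mpr hne.symm
  have hQ2 : Q_star ^ 2 * (s + 1) ^ 2 = ((s ^ 2 + s + 1) * H_star - s ^ 2) ^ 2 := by
    rw [hQ', div_pow, div_mul_cancel₀ _ (pow_ne_zero 2 hs1)]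
  rw [div_eq_div_iff hd (pow_ne_zero 2 hs1)]
  linear_combination (H_star - s ^ 2) * hquad - hQ2
end

section
/- Let δ > 0, K > 0, K₀ > 0, c₁ ∈ ℝ, and c₂ < 0 be given. Then there exists Λ > 0, depending only on δ, K, K₀, c₁, c₂, with the following property: for every s < 0, every triple of continuous functions v, q₁, q₂ : [s,0] → ℝ with |v(x)| ≤ K, q₁(x) ≤ −δ, and q₂(x) ≤ −δ for all x ∈ [s,0], every κ ∈ ℝ with |κ| ≤ K₀, every λ ≥ Λ, and every twice continuously differentiable w : [s,0] → ℂ satisfying w''(x) = −( v(x) + q₁(x) λ + q₂(x) λ² ) w(x) on [s,0] together with the boundary conditions w'(0) = (c₁ + c₂ λ) w(0) and w'(s) = κ w(s), one has w(x) = 0 for all x ∈ [s,0]. -/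
/-- Uniform high-frequency nonexistence for the quadratic pencil
`w'' = −(v + q₁λ + q₂λ²)w` with Robin conditions `w'(0) = (c₁ + c₂λ)w(0)` (`c₂ < 0`) and
`w'(s) = κ w(s)`: there is `Λ > 0`, depending only on `δ, K, K₀, c₁, c₂`, such that for
all `s < 0`, all admissible coefficients, all `|κ| ≤ K₀`, and all `λ ≥ Λ`, the only
solution is `w ≡ 0`. -/
theorem uniform_high_frequency_nonexistence
    (δ K K₀ c₁ c₂ : ℝ) (hδ : 0 < δ) (hK : 0 < K) (hK₀ : 0 < K₀) (hc₂ : c₂ < 0) :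
    ∃ Λ : ℝ, 0 < Λ ∧
      ∀ s : ℝ, s < 0 →
      ∀ v q₁ q₂ : ℝ → ℝ,
        ContinuousOn v (Set.Icc s 0) →
        ContinuousOn q₁ (Set.Icc s 0) →
        ContinuousOn q₂ (Set.Icc s 0) →
        (∀ x ∈ Set.Icc s 0, |v x| ≤ K) →
        (∀ x ∈ Set.Icc s 0, q₁ x ≤ -δ) →
        (∀ x ∈ Set.Icc s 0, q₂ x ≤ -δ) →
      ∀ κ : ℝ, |κ| ≤ K₀ →
      ∀ lam : ℝ, Λ ≤ lam →
      ∀ w w' w'' : ℝ → ℂ,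
        (∀ x ∈ Set.Icc s 0, HasDerivWithinAt w (w' x) (Set.Icc s 0) x) →
        (∀ x ∈ Set.Icc s 0, HasDerivWithinAt w' (w'' x) (Set.Icc s 0) x) →
        ContinuousOn w'' (Set.Icc s 0) →
        (∀ x ∈ Set.Icc s 0,
          w'' x = -(((v x : ℝ) : ℂ) + ((q₁ x : ℝ) : ℂ) * (lam : ℂ)
              + ((q₂ x : ℝ) : ℂ) * (lam : ℂ) ^ 2) * w x) →
        w' 0 = ((c₁ : ℂ) + (c₂ : ℂ) * (lam : ℂ)) * w 0 →
        w' s = (κ : ℂ) * w s →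
        ∀ x ∈ Set.Icc s 0, w x = 0 := by
  have hA : 0 ≤ (K + K₀ ^ 2) / δ := by positivity
  have hB : 0 ≤ (|c₁| + K₀) / (-c₂) := div_nonneg (by positivity) (by linarith)
  refine ⟨1 + (K + K₀ ^ 2) / δ + (|c₁| + K₀) / (-c₂), by linarith, ?_⟩
  intro s hs v q₁ q₂ _ _ _ hv hq₁ hq₂ κ hκ lam hlam w w' w'' hw hw' _ hode h0 hsb
  have hlam0 : 0 < lam := by linarith
  have hl1 : K + K₀ ^ 2 < δ * lam := by
    have h : (K + K₀ ^ 2) / δ < lam := by linarith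
    rw [div_lt_iff₀ hδ] at h
    linarith
  have hl2 : c₁ + c₂ * lam + K₀ ≤ 0 := by
    have h : (|c₁| + K₀) / (-c₂) ≤ lam := by linarith
    rw [div_le_iff₀ (by linarith)] at h
    linarith [le_abs_self c₁]
  have hP : ∀ x ∈ Set.Icc s 0, K₀ ^ 2 < -(v x + q₁ x * lam + q₂ x * lam ^ 2) := by
    intro x hx
    have h1 := (abs_le.mp (hv x hx)).2
    have h2 := mul_le_mul_of_nonneg_right (hq₁ x hx) hlam0.le
    have h3 := mul_le_mul_of_nonneg_right (hq₂ x hx) (sq_nonneg lam)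
    have h4 : 0 ≤ δ * lam ^ 2 := by positivity
    linarith
  have re_d : ∀ (f : ℝ → ℂ) (f' : ℂ) (x : ℝ), HasDerivWithinAt f f' (Set.Icc s 0) x →
      HasDerivWithinAt (fun y => (f y).re) f'.re (Set.Icc s 0) x := fun f f' x h =>
    Complex.reCLM.hasFDerivAt.comp_hasDerivWithinAt x h
  have im_d : ∀ (f : ℝ → ℂ) (f' : ℂ) (x : ℝ), HasDerivWithinAt f f' (Set.Icc s 0) x →
      HasDerivWithinAt (fun y => (f y).im) f'.im (Set.Icc s 0) x := fun f f' x h =>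
    Complex.imCLM.hasFDerivAt.comp_hasDerivWithinAt x h
  obtain ⟨φ, hφ⟩ : ∃ φ : ℝ → ℝ, φ = fun x => ((w x).re * (w' x).re + (w x).im * (w' x).im)
      + K₀ * ((w x).re * (w x).re + (w x).im * (w x).im) := ⟨_, rfl⟩
  obtain ⟨ψ, hψ⟩ : ∃ ψ : ℝ → ℝ, ψ = fun x =>
      ((w' x).re + K₀ * (w x).re) ^ 2 + ((w' x).im + K₀ * (w x).im) ^ 2
      + (-(v x + q₁ x * lam + q₂ x * lam ^ 2) - K₀ ^ 2) * ((w x).re ^ 2 + (w x).im ^ 2) :=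
    ⟨_, rfl⟩
  have hd : ∀ x ∈ Set.Icc s 0, HasDerivWithinAt φ (ψ x) (Set.Icc s 0) x := by
    intro x hx
    have a := re_d _ _ _ (hw x hx)
    have b := im_d _ _ _ (hw x hx)
    have c := re_d _ _ _ (hw' x hx)
    have d := im_d _ _ _ (hw' x hx)
    have e : w'' x = ((-(v x + q₁ x * lam + q₂ x * lam ^ 2) : ℝ) : ℂ) * w x := by
      rw [hode x hx]; push_cast; ring
    have er : (w'' x).re = -(v x + q₁ x * lam + q₂ x * lam ^ 2) * (w x).re := by
      rw [e, Complex.re_ofReal_mul]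
    have ei : (w'' x).im = -(v x + q₁ x * lam + q₂ x * lam ^ 2) * (w x).im := by
      rw [e, Complex.im_ofReal_mul]
    rw [hφ, hψ]
    refine (((a.mul c).add (b.mul d)).add
      (((a.mul a).add (b.mul b)).const_mul K₀)).congr_deriv ?_
    rw [er, ei]
    ring
  have hψ0 : ∀ x ∈ Set.Icc s 0, 0 ≤ ψ x := by
    intro x hx
    have := hP x hx
    have h2 : 0 ≤ (-(v x + q₁ x * lam + q₂ x * lam ^ 2) - K₀ ^ 2)
      * ((w x).re ^ 2 + (w x).im ^ 2) := mul_nonneg (by linarith) (by positivity)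
    rw [hψ]
    positivity
  have hmono : MonotoneOn φ (Set.Icc s 0) := by
    refine monotoneOn_of_hasDerivWithinAt_nonneg (f' := ψ) (convex_Icc s 0)
      (fun x hx => (hd x hx).continuousWithinAt)
      (fun x hx => (hd x (interior_subset hx)).mono interior_subset)
      (fun x hx => hψ0 x (interior_subset hx))
  have hs_mem : s ∈ Set.Icc s 0 := ⟨le_rfl, hs.le⟩
  have h0_mem : (0 : ℝ) ∈ Set.Icc s 0 := ⟨hs.le, le_rfl⟩
  have hφs : 0 ≤ φ s := by
    have e : φ s = (κ + K₀) * ((w s).re ^ 2 + (w s).im ^ 2) := by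
      rw [hφ]
      simp only [hsb, Complex.re_ofReal_mul, Complex.im_ofReal_mul]
      ring
    rw [e]
    exact mul_nonneg (by linarith [(abs_le.mp hκ).1]) (by positivity)
  have hφ0 : φ 0 ≤ 0 := by
    have e : φ 0 = (c₁ + c₂ * lam + K₀) * ((w 0).re ^ 2 + (w 0).im ^ 2) := by
      have h0' : w' 0 = ((c₁ + c₂ * lam : ℝ) : ℂ) * w 0 := by rw [h0]; push_cast; ring
      rw [hφ]
      simp only [h0', Complex.re_ofReal_mul, Complex.im_ofReal_mul]
      ring
    rw [e]
    exact mul_nonpos_of_nonpos_of_nonneg hl2 (by positivity)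
  have hz : ∀ x ∈ Set.Icc s 0, φ x = 0 := fun x hx =>
    le_antisymm ((hmono hx h0_mem hx.2).trans hφ0) (hφs.trans (hmono hs_mem hx hx.1))
  intro x hx
  have hd0 : HasDerivWithinAt φ 0 (Set.Icc s 0) x :=
    (hasDerivWithinAt_const x (Set.Icc s 0) (0 : ℝ)).congr hz (hz x hx)
  have hψx : ψ x = 0 := (uniqueDiffOn_Icc hs x hx).eq_deriv _ (hd x hx) hd0
  rw [hψ] at hψx
  have hp : 0 < -(v x + q₁ x * lam + q₂ x * lam ^ 2) - K₀ ^ 2 := by linarith [hP x hx]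
  have hN : (w x).re ^ 2 + (w x).im ^ 2 = 0 := by
    by_contra hne
    have hpos : 0 < (w x).re ^ 2 + (w x).im ^ 2 := lt_of_le_of_ne (by positivity) (Ne.symm hne)
    have := mul_pos hp hpos
    have h1 := sq_nonneg ((w' x).re + K₀ * (w x).re)
    have h2 := sq_nonneg ((w' x).im + K₀ * (w x).im)
    simp only at hψx
    linarith
  apply Complex.ext
  · exact pow_eq_zero_iff (two_ne_zero) |>.mp
      (le_antisymm (by linarith [sq_nonneg (w x).im]) (sq_nonneg (w x).re))
  · exact pow_eq_zero_iff (two_ne_zero) |>.mp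
      (le_antisymm (by linarith [sq_nonneg (w x).re]) (sq_nonneg (w x).im))
end

section
/- Let b > 0 and r > 1/2 be real numbers, and let f : (0,b) → ℝ be measurable with ∫_0^b f(x)²/x dx < ∞. Then for every x ∈ (0,b) the integral ∫_x^b ξ^{−r−1} f(ξ) dξ is absolutely convergent, and ∫_0^b x^{2r−1} ( ∫_x^b ξ^{−r−1} f(ξ) dξ )² dx ≤ (1/(2r−1)) ∫_0^b f(x)²/x dx. -/
open MeasureTheory

lemma wh_pow (ξ r : ℝ) (h : 0 < ξ) : (ξ ^ (-r) : ℝ) ^ 2 = ξ ^ (-2 * r) := by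
  rw [← Real.rpow_natCast, ← Real.rpow_mul h.le]; congr 1; push_cast; ring

lemma wh_split (ξ r : ℝ) (h : 0 < ξ) : ξ ^ (-r - 1) = ξ⁻¹ * ξ ^ (-r) := by
  rw [Real.rpow_sub_one h.ne']; field_simp

lemma wh_two (ξ : ℝ) (h : 0 < ξ) : (ξ⁻¹) ^ 2 = ξ ^ (-2 : ℝ) := by
  rw [Real.rpow_neg h.le]; simp

lemma wh_inner (b r : ℝ) (hr : 1 / 2 < r)
    (f : ℝ → ℝ) (hf : Measurable f)
    (hint : IntegrableOn (fun x => f x ^ 2 / x) (Set.Ioo 0 b)) (x : ℝ) (hx : x ∈ Set.Ioo 0 b) :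
    IntegrableOn (fun ξ => ξ ^ (-r - 1) * f ξ) (Set.Ioo x b) ∧
    IntegrableOn (fun ξ => ξ ^ (-2 * r) * f ξ ^ 2) (Set.Ioo x b) ∧
    x * (∫ ξ in Set.Ioo x b, ξ ^ (-r - 1) * f ξ) ^ 2 ≤
      ∫ ξ in Set.Ioo x b, ξ ^ (-2 * r) * f ξ ^ 2 := by
  have hx0 : 0 < x := hx.1
  have hA0 : IntegrableOn (fun ξ : ℝ => ξ ^ (-2 : ℝ)) (Set.Ioi x) :=
    integrableOn_Ioi_rpow_of_lt (by norm_num) hx0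
  have hA : IntegrableOn (fun ξ : ℝ => ξ ^ (-2 : ℝ)) (Set.Ioo x b) :=
    hA0.mono_set Set.Ioo_subset_Ioi_self
  have hAle : ∫ ξ in Set.Ioo x b, ξ ^ (-2 : ℝ) ≤ x⁻¹ := by
    have h1 : ∫ ξ in Set.Ioo x b, ξ ^ (-2 : ℝ) ≤ ∫ ξ in Set.Ioi x, ξ ^ (-2 : ℝ) := by
      apply setIntegral_mono_set hA0
      · filter_upwards [ae_restrict_mem measurableSet_Ioi] with ξ hξ
        exact Real.rpow_nonneg (hx0.trans hξ).le _
      · exact Set.Ioo_subset_Ioi_self.eventuallyLE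
    rw [integral_Ioi_rpow_of_lt (by norm_num) hx0] at h1
    refine h1.trans (le_of_eq ?_)
    rw [show (-2 : ℝ) + 1 = -1 by norm_num, Real.rpow_neg_one]
    ring
  have hC : IntegrableOn (fun ξ => ξ ^ (-2 * r) * f ξ ^ 2) (Set.Ioo x b) := by
    have h1 : IntegrableOn (fun ξ => x ^ (1 - 2 * r) * (f ξ ^ 2 / ξ)) (Set.Ioo x b) :=
      (hint.mono_set (Set.Ioo_subset_Ioo_left hx0.le)).const_mul _
    refine Integrable.mono' h1 (Measurable.aestronglyMeasurable (by fun_prop)) ?_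
    filter_upwards [ae_restrict_mem measurableSet_Ioo] with ξ hξ
    have hξ0 : 0 < ξ := hx0.trans hξ.1
    rw [Real.norm_of_nonneg (by positivity)]
    have h2 : ξ ^ (-2 * r) = ξ ^ (1 - 2 * r) / ξ := by
      rw [← Real.rpow_sub_one hξ0.ne']; congr 1; ring
    have h3 : ξ ^ (1 - 2 * r) ≤ x ^ (1 - 2 * r) :=
      Real.rpow_le_rpow_of_nonpos hx0 hξ.1.le (by linarith)
    rw [h2, div_mul_eq_mul_div, mul_div_assoc]
    gcongr
  have hB : IntegrableOn (fun ξ => ξ ^ (-r - 1) * f ξ) (Set.Ioo x b) := by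
    refine Integrable.mono' (hA.add hC) (Measurable.aestronglyMeasurable (by fun_prop)) ?_
    filter_upwards [ae_restrict_mem measurableSet_Ioo] with ξ hξ
    have hξ0 : 0 < ξ := hx0.trans hξ.1
    simp only [Pi.add_apply]
    rw [wh_split ξ r hξ0, ← wh_pow ξ r hξ0, ← wh_two ξ hξ0, Real.norm_eq_abs, abs_le]
    constructor <;> nlinarith [sq_nonneg (ξ⁻¹ + ξ ^ (-r) * f ξ), sq_nonneg (ξ⁻¹ - ξ ^ (-r) * f ξ),
      sq_nonneg (ξ⁻¹), sq_nonneg (ξ ^ (-r) * f ξ)]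
  refine ⟨hB, hC, ?_⟩
  set B := ∫ ξ in Set.Ioo x b, ξ ^ (-r - 1) * f ξ with hBdef
  set C := ∫ ξ in Set.Ioo x b, ξ ^ (-2 * r) * f ξ ^ 2 with hCdef
  have h0 : 0 ≤ ∫ ξ in Set.Ioo x b, ((x * B) ^ 2 * ξ ^ (-2 : ℝ)
      - (2 * (x * B)) * (ξ ^ (-r - 1) * f ξ) + ξ ^ (-2 * r) * f ξ ^ 2) := by
    apply setIntegral_nonneg measurableSet_Ioo
    intro ξ hξ
    have hξ0 : 0 < ξ := hx0.trans hξ.1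
    rw [wh_split ξ r hξ0, ← wh_pow ξ r hξ0, ← wh_two ξ hξ0]
    nlinarith [sq_nonneg (x * B * ξ⁻¹ - ξ ^ (-r) * f ξ)]
  have hAB : IntegrableOn (fun ξ : ℝ => (x * B) ^ 2 * ξ ^ (-2 : ℝ)
      - (2 * (x * B)) * (ξ ^ (-r - 1) * f ξ)) (Set.Ioo x b) :=
    (hA.const_mul _).sub (hB.const_mul _)
  rw [integral_add hAB hC,
    integral_sub (hA.const_mul _) (hB.const_mul _), integral_const_mul, integral_const_mul,
    ← hBdef, ← hCdef] at h0
  have h1 : (x * B) ^ 2 * ∫ ξ in Set.Ioo x b, ξ ^ (-2 : ℝ) ≤ (x * B) ^ 2 * x⁻¹ := by gcongr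
  have h2 : (x * B) ^ 2 * x⁻¹ = x * B ^ 2 := by field_simp
  nlinarith

lemma wh_pint (r ξ : ℝ) (hr : 1 / 2 < r) (hξ : 0 < ξ) :
    ∫⁻ x in Set.Ioo 0 ξ, ENNReal.ofReal (x ^ (2 * r - 2)) =
      ENNReal.ofReal (ξ ^ (2 * r - 1) / (2 * r - 1)) := by
  have h1 : IntervalIntegrable (fun x : ℝ => x ^ (2 * r - 2)) volume 0 ξ :=
    intervalIntegral.intervalIntegrable_rpow' (by linarith)
  have h2 := integral_rpow (a := 0) (b := ξ) (r := 2 * r - 2) (Or.inl (by linarith))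
  rw [intervalIntegrable_iff_integrableOn_Ioo_of_le hξ.le] at h1
  rw [intervalIntegral.integral_of_le hξ.le, integral_Ioc_eq_integral_Ioo,
    Real.zero_rpow (by linarith), sub_zero, show 2 * r - 2 + 1 = 2 * r - 1 by ring] at h2
  rw [← h2, ofReal_integral_eq_lintegral_ofReal h1]
  filter_upwards [ae_restrict_mem measurableSet_Ioo] with x hx
  exact Real.rpow_nonneg hx.1.le _

/-- Weighted Hardy-type inequality at a regular singular point (dominant solution):
for `r > 1/2` and `∫_0^b f²/x dx < ∞`, the inner integrals `∫_x^b ξ^{−r−1} f(ξ) dξ`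
converge absolutely for every `x ∈ (0,b)`, and
`∫_0^b x^{2r−1} (∫_x^b ξ^{−r−1} f dξ)² dx ≤ (1/(2r−1)) ∫_0^b f²/x dx`. -/
theorem weighted_hardy_dominant
    (b r : ℝ) (hb : 0 < b) (hr : 1 / 2 < r)
    (f : ℝ → ℝ) (hf : Measurable f)
    (hint : IntegrableOn (fun x => f x ^ 2 / x) (Set.Ioo 0 b)) :
    (∀ x ∈ Set.Ioo 0 b,
        IntegrableOn (fun ξ => ξ ^ (-r - 1) * f ξ) (Set.Ioo x b))
    ∧ (∫ x in Set.Ioo 0 b,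
          x ^ (2 * r - 1) * (∫ ξ in Set.Ioo x b, ξ ^ (-r - 1) * f ξ) ^ 2)
        ≤ (1 / (2 * r - 1)) * ∫ x in Set.Ioo 0 b, f x ^ 2 / x := by
  refine ⟨fun x hx => (wh_inner b r hr f hf hint x hx).1, ?_⟩
  have hr' : 0 < 2 * r - 1 := by linarith
  have hR0 : 0 ≤ (1 / (2 * r - 1)) * ∫ x in Set.Ioo 0 b, f x ^ 2 / x := by
    apply mul_nonneg (by positivity)
    apply setIntegral_nonneg measurableSet_Ioo
    intro x hx
    have := hx.1
    positivity
  by_cases hI : IntegrableOn (fun x => x ^ (2 * r - 1) *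
      (∫ ξ in Set.Ioo x b, ξ ^ (-r - 1) * f ξ) ^ 2) (Set.Ioo 0 b)
  swap
  · rw [integral_undef hI]; exact hR0
  rw [← ENNReal.ofReal_le_ofReal_iff hR0, ← integral_const_mul,
    ofReal_integral_eq_lintegral_ofReal hI, ofReal_integral_eq_lintegral_ofReal (hint.const_mul _)]
  rotate_left
  · filter_upwards [ae_restrict_mem measurableSet_Ioo] with x hx
    have := hx.1
    simp only [Pi.zero_apply]
    positivity
  · filter_upwards [ae_restrict_mem measurableSet_Ioo] with x hx
    have := hx.1
    simp only [Pi.zero_apply]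
    positivity
  let K : ℝ → ℝ → ENNReal := fun x ξ => Set.indicator {p : ℝ × ℝ | p.1 < p.2}
    (fun p => ENNReal.ofReal (p.1 ^ (2 * r - 2)) * ENNReal.ofReal (p.2 ^ (-2 * r) * f p.2 ^ 2))
    (x, ξ)
  have hK : Measurable (Function.uncurry K) := by
    have : Function.uncurry K = Set.indicator {p : ℝ × ℝ | p.1 < p.2}
      (fun p => ENNReal.ofReal (p.1 ^ (2 * r - 2)) *
        ENNReal.ofReal (p.2 ^ (-2 * r) * f p.2 ^ 2)) := by
      ext ⟨x, y⟩; rfl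
    rw [this]
    exact Measurable.indicator (by fun_prop) (measurableSet_lt measurable_fst measurable_snd)
  calc _ ≤ ∫⁻ x in Set.Ioo 0 b, ∫⁻ ξ in Set.Ioo 0 b, K x ξ := by
        apply setLIntegral_mono' measurableSet_Ioo
        intro x hx
        obtain ⟨-, hC, hle⟩ := wh_inner b r hr f hf hint x hx
        have hx0 := hx.1
        have e1 : ∫⁻ ξ in Set.Ioo 0 b, K x ξ = ∫⁻ ξ in Set.Ioo x b,
            ENNReal.ofReal (x ^ (2 * r - 2)) * ENNReal.ofReal (ξ ^ (-2 * r) * f ξ ^ 2) := by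
          rw [← lintegral_indicator measurableSet_Ioo, ← lintegral_indicator measurableSet_Ioo]
          congr 1
          ext ξ
          simp only [K, Set.indicator_apply, Set.mem_Ioo, Set.mem_ofPred_eq]
          split_ifs <;> first | rfl | (exfalso; grind)
        rw [e1, lintegral_const_mul _ (by fun_prop), ← ofReal_integral_eq_lintegral_ofReal hC,
          ← ENNReal.ofReal_mul (by positivity)]
        · apply ENNReal.ofReal_le_ofReal
          have : x ^ (2 * r - 1) = x ^ (2 * r - 2) * x := by
            rw [← Real.rpow_add_one hx0.ne']; congr 1; ring
          rw [this, mul_assoc]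
          gcongr
        · filter_upwards [ae_restrict_mem measurableSet_Ioo] with ξ hξ
          have := hx0.trans hξ.1
          simp only [Pi.zero_apply]
          positivity
    _ = ∫⁻ ξ in Set.Ioo 0 b, ∫⁻ x in Set.Ioo 0 b, K x ξ :=
        lintegral_lintegral_swap hK.aemeasurable
    _ ≤ _ := by
        apply setLIntegral_mono' measurableSet_Ioo
        intro ξ hξ
        have hξ0 := hξ.1
        have e1 : ∫⁻ x in Set.Ioo 0 b, K x ξ = ∫⁻ x in Set.Ioo 0 ξ,
            ENNReal.ofReal (x ^ (2 * r - 2)) * ENNReal.ofReal (ξ ^ (-2 * r) * f ξ ^ 2) := by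
          rw [← lintegral_indicator measurableSet_Ioo, ← lintegral_indicator measurableSet_Ioo]
          congr 1
          ext x
          have := hξ.2
          simp only [K, Set.indicator_apply, Set.mem_Ioo, Set.mem_ofPred_eq]
          split_ifs <;> first | rfl | (exfalso; grind)
        rw [e1, lintegral_mul_const _ (by fun_prop), wh_pint r ξ hr hξ0,
          ← ENNReal.ofReal_mul (by positivity)]
        apply ENNReal.ofReal_le_ofReal
        apply le_of_eq
        have : ξ ^ (2 * r - 1) * ξ ^ (-2 * r) = ξ⁻¹ := by
          rw [← Real.rpow_add hξ0, ← Real.rpow_neg_one]; congr 1; ring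
        calc _ = (ξ ^ (2 * r - 1) * ξ ^ (-2 * r)) * f ξ ^ 2 / (2 * r - 1) := by ring
          _ = _ := by rw [this]; ring
end
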